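/- Let q = (e^{2πiλ₁},…,e^{2πiλ_ν}) ∈ (ℂ*)^ν be non-resonant and satisfy the Bruno condition 𝓑(q) < ∞. Let a = (a₁,…,a_ν) be holomorphic on a neighborhood of 0 in ℂ^ν with a(0) = 0 and Da(0) = 0, and set g = R_q ∘ (id + a). Then the linearization problem has a convergent solution: there exist r > 0 and a holomorphic map h : 𝔻_r^ν → ℂ^ν with h(0) = 0 and Dh(0) = id, such that g(h(z)) = h(R_q z) for all z in some neighborhood of 0. -/

import Mathlib

/-!
Write `a z = ∑ A m z^m` over `|m| ≥ 2`. Comparing coefficients in `g ∘ h = h ∘ R_q` and iterating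
expresses the formal solution `h` as a sum over rooted trees: each leaf contributes a coordinate of
`z`, and an inner vertex of colour `j` and multi-index `m` contributes `A m j` divided by
`q^d / q_j - 1`, where `d` counts the leaves above it by colour. Without the divisors this is the
solution of `x = z + a x`, which converges near `0`. If two divisors are both small compared with
`Ω k`, for a vertex and one above it, then so is a frequency of degree one more than the difference
of their degrees, which forces that difference to exceed `k`. Hence a tree with `N` leaves has at
most `2 N / (k + 1)` such vertices, and summation by parts bounds the logarithm of the inverse of
the product of its divisors by a constant multiple of `N`, the constant being governed by the Bruno
series.
-/

open Complex Metric

noncomputable section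

/-- The set of integers inside ℂ. -/
def intsC : Set ℂ := Set.range ((↑·) : ℤ → ℂ)

/-- `Ω(k) = min ({1} ∪ {d(m·λ - λ_j, ℤ) : j ∈ [ν], m ∈ ℕ^ν, 2 ≤ |m| ≤ k+1})`. -/
def omegaD {ν : ℕ} (lam : Fin ν → ℂ) (k : ℕ) : ℝ :=
  sInf ({1} ∪ {x : ℝ | ∃ j : Fin ν, ∃ m : Fin ν → ℕ,
    2 ≤ ∑ i, m i ∧ ∑ i, m i ≤ k + 1 ∧
    x = Metric.infDist ((∑ i, (m i : ℂ) * lam i) - lam j) intsC})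

/-- The `k`-th term (`k ≥ 1`, shifted to `k : ℕ`) of the Bruno series
`𝓑(q) = ∑_{k≥1} (1/k - 1/(k+1)) log(1/Ω(k))`. -/
def brunoTermD {ν : ℕ} (lam : Fin ν → ℂ) (k : ℕ) : ℝ :=
  ((1 : ℝ) / (k + 1) - 1 / (k + 2)) * Real.log (1 / omegaD lam (k + 1))

/-- `q ∈ (ℂ*)^ν` is non-resonant if `q_i ≠ q^m` for all `i` and all `m ∈ ℕ^ν` with `|m| ≥ 2`. -/
def NonResonantQ {ν : ℕ} (q : Fin ν → ℂ) : Prop :=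
  ∀ i : Fin ν, ∀ m : Fin ν → ℕ, 2 ≤ ∑ j, m j → q i ≠ ∏ j, q j ^ m j

section ProductsOfSeries

open Filter Topology ENNReal

variable {ι : Type*} [Fintype ι] {β : ι → Type*}

theorem tsum_prod_le_prod_tsum (f : ∀ i, β i → ℝ≥0∞) :
    ∑' p : ∀ i, β i, ∏ i, f i (p i) ≤ ∏ i, ∑' b, f i b := by
  classical
  refine ENNReal.summable.tsum_le_of_sum_le fun F => ?_
  have hF : F ⊆ Fintype.piFinset fun i => F.image fun p => p i := fun p hp =>
    Fintype.mem_piFinset.2 fun i => Finset.mem_image_of_mem _ hp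
  calc ∑ p ∈ F, ∏ i, f i (p i)
      ≤ ∑ p ∈ Fintype.piFinset fun i => F.image fun p => p i, ∏ i, f i (p i) :=
        Finset.sum_le_sum_of_subset hF
    _ = ∏ i, ∑ b ∈ F.image fun p => p i, f i b := (Finset.prod_univ_sum _ _).symm
    _ ≤ ∏ i, ∑' b, f i b := Finset.prod_le_prod' fun i _ => ENNReal.sum_le_tsum _

variable {𝕜 : Type*} [NormedField 𝕜]

theorem enorm_finset_prod {α : Type*} (s : Finset α) (f : α → 𝕜) :
    ‖∏ i ∈ s, f i‖ₑ = ∏ i ∈ s, ‖f i‖ₑ := by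
  simp only [enorm, nnnorm_prod, ofNNReal_finsetProd]

theorem summable_norm_prod {f : ∀ i, β i → 𝕜} (hf : ∀ i, Summable fun b => ‖f i b‖) :
    Summable fun p : ∀ i, β i => ‖∏ i, f i (p i)‖ := by
  simp only [← tsum_enorm_ne_top_iff_summable_norm, enorm_finset_prod] at hf ⊢
  exact ne_top_of_le_ne_top (prod_ne_top fun i _ => hf i)
    (tsum_prod_le_prod_tsum fun i b => ‖f i b‖ₑ)

theorem hasSum_prod [CompleteSpace 𝕜] {f : ∀ i, β i → 𝕜}
    (hf : ∀ i, Summable fun b => ‖f i b‖) :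
    HasSum (fun p : ∀ i, β i => ∏ i, f i (p i)) (∏ i, ∑' b, f i b) := by
  classical
  have hsum := (summable_norm_prod hf).of_norm.hasSum
  have hbox : Tendsto (fun F : ∀ i, Finset (β i) => Fintype.piFinset F) atTop atTop :=
    tendsto_atTop_finset_of_monotone (fun _ _ h => Fintype.piFinset_subset _ _ h)
      fun p => ⟨fun i => {p i}, by simp⟩
  have hfactor : Tendsto (fun F : ∀ i, Finset (β i) => ∏ i, ∑ b ∈ F i, f i b) atTop
      (𝓝 (∏ i, ∑' b, f i b)) := by
    refine tendsto_finsetProd _ fun i _ => (hf i).of_norm.hasSum.comp ?_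
    exact tendsto_atTop_atTop.2 fun b =>
      ⟨Function.update (fun _ => ∅) i b, fun F hF => by simpa using hF i⟩
  simp only [Finset.prod_univ_sum] at hfactor
  rwa [← tendsto_nhds_unique (hsum.comp hbox) hfactor]

end ProductsOfSeries

section PolydiscExpansion

open MeasureTheory

variable {E : Type*} [NormedAddCommGroup E] {n : ℕ}

/-- The closed polydisc with centre `c` and polyradius `R`. -/
def closedPolydisc (c : Fin n → ℂ) (R : Fin n → ℝ) : Set (Fin n → ℂ) :=
  Set.univ.pi fun i => closedBall (c i) (R i)

theorem isCompact_closedPolydisc (c : Fin n → ℂ) (R : Fin n → ℝ) :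
    IsCompact (closedPolydisc c R) :=
  isCompact_univ_pi fun _ => isCompact_closedBall _ _

theorem torusMap_mem_closedPolydisc (c : Fin n → ℂ) {R : Fin n → ℝ} (hR : ∀ i, 0 < R i)
    (θ : Fin n → ℝ) : torusMap c R θ ∈ closedPolydisc c R := fun i _ => by
  simp [torusMap, dist_eq_norm, abs_of_pos (hR i)]

theorem norm_torusMap_sub (c : Fin n → ℂ) {R : Fin n → ℝ} (hR : ∀ i, 0 < R i) (θ : Fin n → ℝ)
    (i : Fin n) : ‖torusMap c R θ i - c i‖ = R i := by
  simp [torusMap, abs_of_pos (hR i)]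

theorem norm_prod_inv_torusMap_sub_pow (c : Fin n → ℂ) {R : Fin n → ℝ} (hR : ∀ i, 0 < R i)
    (θ : Fin n → ℝ) (k : Fin n → ℕ) :
    ‖∏ i, (torusMap c R θ i - c i)⁻¹ ^ k i‖ = ∏ i, (R i)⁻¹ ^ k i := by
  simp only [norm_prod, norm_pow, norm_inv, norm_torusMap_sub c hR]

theorem continuous_torusMap (c : Fin n → ℂ) (R : Fin n → ℝ) : Continuous (torusMap c R) := by
  unfold torusMap; fun_prop

variable [NormedSpace ℂ E]

theorem hasSum_torusIntegral {α : Type*} [Countable α] {F : α → (Fin n → ℂ) → E}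
    {f : (Fin n → ℂ) → E} {c : Fin n → ℂ} {R : Fin n → ℝ} {u : α → ℝ} (hu : Summable u)
    (hF : ∀ a, Continuous fun θ => F a (torusMap c R θ))
    (hFu : ∀ a θ, ‖F a (torusMap c R θ)‖ ≤ u a)
    (hf : ∀ θ, HasSum (fun a => F a (torusMap c R θ)) (f (torusMap c R θ))) :
    HasSum (fun a => ∯ w in T(c, R), F a w) (∯ w in T(c, R), f w) := by
  have : IsFiniteMeasure (volume.restrict (Set.Icc (0 : Fin n → ℝ) fun _ => 2 * Real.pi)) :=
    ⟨by simpa using measure_Icc_lt_top⟩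
  refine hasSum_integral_of_dominated_convergence (fun a _ => (∏ i, |R i|) * u a)
    (fun a => ?_) (fun a => .of_forall fun θ => ?_) (.of_forall fun _ => hu.mul_left _)
    (integrable_const _) (.of_forall fun θ => (hf θ).const_smul _)
  · exact (Continuous.smul (by fun_prop) (hF a)).aestronglyMeasurable
  · rw [norm_smul]
    gcongr
    · simp
    · exact hFu a θ

theorem cons_mem_closedPolydisc {c : Fin (n + 1) → ℂ} {R : Fin (n + 1) → ℝ} {w : ℂ}
    {y : Fin n → ℂ} :
    (Fin.cons w y : Fin (n + 1) → ℂ) ∈ closedPolydisc c R ↔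
      w ∈ closedBall (c 0) (R 0) ∧ y ∈ closedPolydisc (c ∘ Fin.succ) (R ∘ Fin.succ) := by
  simp [closedPolydisc, Fin.forall_fin_succ]

theorem continuous_prod_inv_smul_torusMap {f : (Fin n → ℂ) → E} {c z : Fin n → ℂ}
    {R : Fin n → ℝ} (hf : ContinuousOn f (closedPolydisc c R)) (hz : ∀ i, z i ∈ ball (c i) (R i))
    (k : Fin n → ℕ) :
    Continuous fun θ => (∏ i, (torusMap c R θ i - z i)⁻¹ ^ k i) • f (torusMap c R θ) := by
  have hR : ∀ i, 0 < R i := fun i => dist_nonneg.trans_lt (hz i)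
  have hne : ∀ i θ, torusMap c R θ i - z i ≠ 0 := fun i θ h => by
    have hnorm := norm_torusMap_sub c hR θ i
    rw [sub_eq_zero.1 h] at hnorm
    exact (mem_ball_iff_norm.1 (hz i)).ne hnorm
  have hcoord : ∀ i, Continuous fun θ => torusMap c R θ i - z i := fun i =>
    ((continuous_apply i).comp (continuous_torusMap c R)).sub continuous_const
  exact (continuous_finsetProd _ fun i _ => ((hcoord i).inv₀ (hne i)).pow (k i)).smul
    (hf.comp_continuous (continuous_torusMap c R) (torusMap_mem_closedPolydisc c hR))

theorem torusIntegral_prod_sub_inv_smul [CompleteSpace E] {f : (Fin n → ℂ) → E}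
    {c z : Fin n → ℂ} {R : Fin n → ℝ}
    (hf : DifferentiableOn ℂ f (closedPolydisc c R)) (hz : ∀ i, z i ∈ ball (c i) (R i)) :
    (∯ w in T(c, R), (∏ i, (w i - z i)⁻¹) • f w) = (2 * Real.pi * I) ^ n • f z := by
  induction n with
  | zero => simp [Subsingleton.elim c z]
  | succ n ih =>
    have hint : TorusIntegrable (fun w => (∏ i, (w i - z i)⁻¹) • f w) c R := by
      have hcont := continuous_prod_inv_smul_torusMap hf.continuousOn hz 1
      simp only [Pi.one_apply, pow_one] at hcont
      exact hcont.integrableOn_Icc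
    have hinner : ∀ w ∈ closedBall (c 0) (R 0),
        (∯ y in T(c ∘ Fin.succ, R ∘ Fin.succ),
          (∏ i, ((Fin.cons w y : Fin (n + 1) → ℂ) i - z i)⁻¹) • f (Fin.cons w y)) =
        (w - z 0)⁻¹ • (2 * Real.pi * I : ℂ) ^ n • f (Fin.cons w (Fin.tail z)) := fun w hw => by
      simp only [Fin.prod_univ_succ, Fin.cons_zero, Fin.cons_succ, mul_smul, torusIntegral_smul]
      congr 1
      refine ih (hf.comp (f := fun y : Fin n → ℂ => (Fin.cons w y : Fin (n + 1) → ℂ))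
        ((differentiableOn_const w).finCons differentiableOn_id)
        fun y hy => cons_mem_closedPolydisc.2 ⟨hw, hy⟩) fun i => hz i.succ
    have houter : DifferentiableOn ℂ
        (fun w => (2 * Real.pi * I : ℂ) ^ n • f (Fin.cons w (Fin.tail z)))
        (closedBall (c 0) (R 0)) := by
      have hcons : DifferentiableOn ℂ (fun w => (Fin.cons w (Fin.tail z) : Fin (n + 1) → ℂ))
          (closedBall (c 0) (R 0)) :=
        DifferentiableOn.finCons differentiableOn_id (differentiableOn_const _)
      exact (hf.comp hcons fun w hw => cons_mem_closedPolydisc.2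
        ⟨hw, fun i _ => ball_subset_closedBall (hz i.succ)⟩).const_smul _
    have hR : 0 ≤ R 0 := (dist_nonneg.trans_lt (hz 0)).le
    rw [torusIntegral_succ hint, circleIntegral.integral_congr hR fun w hw =>
      hinner w (sphere_subset_closedBall hw), houter.circleIntegral_sub_inv_smul (hz 0),
      Fin.cons_self_tail, smul_smul, ← pow_succ']

/-- The Cauchy coefficient of index `m` of `f` on the torus with centre `c` and polyradius `R`:
the Taylor coefficient of `f` at `c` when `f` is holomorphic on the polydisc. -/
def cauchyCoeff (f : (Fin n → ℂ) → E) (c : Fin n → ℂ) (R : Fin n → ℝ) (m : Fin n → ℕ) : E :=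
  ((2 * Real.pi * I : ℂ) ^ n)⁻¹ • ∯ w in T(c, R), (∏ i, (w i - c i)⁻¹ ^ (m i + 1)) • f w

theorem norm_cauchyCoeff_le {f : (Fin n → ℂ) → E} {c : Fin n → ℂ} {R : Fin n → ℝ} {M : ℝ}
    (hR : ∀ i, 0 < R i) (hM : ∀ w ∈ closedPolydisc c R, ‖f w‖ ≤ M) (m : Fin n → ℕ) :
    ‖cauchyCoeff f c R m‖ ≤ M * ∏ i, (R i)⁻¹ ^ m i := by
  have hbound : ∀ θ, ‖(∏ i, (torusMap c R θ i - c i)⁻¹ ^ (m i + 1)) • f (torusMap c R θ)‖ ≤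
      (∏ i, (R i)⁻¹ ^ (m i + 1)) * M := fun θ => by
    rw [norm_smul, norm_prod_inv_torusMap_sub_pow c hR]
    gcongr
    · exact Finset.prod_nonneg fun i _ => pow_nonneg (inv_nonneg.2 (hR i).le) _
    · exact hM _ (torusMap_mem_closedPolydisc c hR θ)
  calc ‖cauchyCoeff f c R m‖
      ≤ ((2 * Real.pi) ^ n)⁻¹ *
          (((2 * Real.pi) ^ n * ∏ i, |R i|) * ((∏ i, (R i)⁻¹ ^ (m i + 1)) * M)) := by
        rw [cauchyCoeff, norm_smul]
        gcongr
        · simp [abs_of_pos Real.pi_pos]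
        · exact norm_torusIntegral_le_of_norm_le_const hbound
    _ = M * ∏ i, |R i| * (R i)⁻¹ ^ (m i + 1) := by
        rw [Finset.prod_mul_distrib]
        have hpi : (2 * Real.pi) ^ n ≠ 0 := by positivity
        field_simp
    _ = M * ∏ i, (R i)⁻¹ ^ m i := by
        congr! 2 with i
        rw [abs_of_pos (hR i), pow_succ', mul_inv_cancel_left₀ (hR i).ne']

theorem hasSum_pow_mul_inv_pow_succ {z w : ℂ} (h : ‖z‖ < ‖w‖) :
    HasSum (fun k : ℕ => z ^ k * w⁻¹ ^ (k + 1)) (w - z)⁻¹ := by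
  have hw : w ≠ 0 := norm_pos_iff.1 ((norm_nonneg z).trans_lt h)
  have hgeom := (hasSum_geometric_of_norm_lt_one (ξ := z * w⁻¹)
    (by rwa [norm_mul, norm_inv, ← div_eq_mul_inv, div_lt_one (norm_pos_iff.2 hw)])).mul_right w⁻¹
  rw [← mul_inv, sub_mul, one_mul, inv_mul_cancel_right₀ hw] at hgeom
  simpa only [mul_pow, pow_succ, mul_assoc] using hgeom

theorem hasSum_prod_pow_mul_inv_pow_succ {z w : Fin n → ℂ} (h : ∀ i, ‖z i‖ < ‖w i‖) :
    HasSum (fun m : Fin n → ℕ => (∏ i, z i ^ m i) * ∏ i, (w i)⁻¹ ^ (m i + 1))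
      (∏ i, (w i - z i)⁻¹) := by
  have hsum := hasSum_prod fun i => (hasSum_pow_mul_inv_pow_succ (h i)).summable.norm
  simpa only [Finset.prod_mul_distrib, (hasSum_pow_mul_inv_pow_succ (h _)).tsum_eq] using hsum

theorem summable_prod_pow {t : Fin n → ℝ} (h0 : ∀ i, 0 ≤ t i) (h1 : ∀ i, t i < 1) :
    Summable fun m : Fin n → ℕ => ∏ i, t i ^ m i :=
  (hasSum_prod fun i => (summable_geometric_of_lt_one (h0 i) (h1 i)).norm).summable

theorem summable_norm_cauchyCoeff_mul_pow {f : (Fin n → ℂ) → E} {c : Fin n → ℂ} {r R M : ℝ}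
    (hr : 0 ≤ r) (hrR : r < R) (hM : ∀ w ∈ closedPolydisc c fun _ => R, ‖f w‖ ≤ M) :
    Summable fun m : Fin n → ℕ => ‖cauchyCoeff f c (fun _ => R) m‖ * r ^ ∑ i, m i := by
  have hR : 0 < R := hr.trans_lt hrR
  have hgeom : Summable fun m : Fin n → ℕ => M * ∏ i, (r / R) ^ m i :=
    (summable_prod_pow (fun _ => by positivity) fun _ => (div_lt_one hR).2 hrR).mul_left M
  refine .of_nonneg_of_le (fun m => by positivity) (fun m => ?_) hgeom
  calc ‖cauchyCoeff f c (fun _ => R) m‖ * r ^ ∑ i, m i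
      ≤ (M * ∏ i, R⁻¹ ^ m i) * ∏ i, r ^ m i := by
        rw [Finset.prod_pow_eq_pow_sum _ _ r]
        gcongr
        exact norm_cauchyCoeff_le (fun _ => hR) hM m
    _ = M * ∏ i, (r / R) ^ m i := by
        simp only [mul_assoc, ← Finset.prod_mul_distrib, ← mul_pow, inv_mul_eq_div]

/-- Expanding the Cauchy kernel into products of geometric series. -/
theorem hasSum_cauchyCoeff [CompleteSpace E] {f : (Fin n → ℂ) → E} {c z : Fin n → ℂ}
    {R : Fin n → ℝ}
    (hf : DifferentiableOn ℂ f (closedPolydisc c R)) (hz : ∀ i, z i ∈ ball (c i) (R i)) :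
    HasSum (fun m : Fin n → ℕ => (∏ i, (z i - c i) ^ m i) • cauchyCoeff f c R m) (f z) := by
  have hR : ∀ i, 0 < R i := fun i => dist_nonneg.trans_lt (hz i)
  have hz' : ∀ i, ‖z i - c i‖ < R i := fun i => mem_ball_iff_norm.1 (hz i)
  obtain ⟨M, hM⟩ := (isCompact_closedPolydisc c R).exists_bound_of_continuousOn hf.continuousOn
  have hu : Summable fun m : Fin n → ℕ =>
      ‖∏ i, (z i - c i) ^ m i‖ * ((∏ i, (R i)⁻¹ ^ (m i + 1)) * M) := by
    have hgeom := (summable_prod_pow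
      (fun i => mul_nonneg (norm_nonneg (z i - c i)) (inv_nonneg.2 (hR i).le))
      fun i => (div_lt_one (hR i)).2 (hz' i)).mul_right ((∏ i, (R i)⁻¹) * M)
    simpa only [norm_prod, norm_pow, pow_succ, mul_pow, Finset.prod_mul_distrib, mul_assoc]
      using hgeom
  have hint : HasSum (fun m : Fin n → ℕ => ∯ w in T(c, R),
      (∏ i, (z i - c i) ^ m i) • (∏ i, (w i - c i)⁻¹ ^ (m i + 1)) • f w)
      (∯ w in T(c, R), (∏ i, (w i - z i)⁻¹) • f w) := by
    refine hasSum_torusIntegral hu (fun m => ?_) (fun m θ => ?_) fun θ => ?_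
    · exact (continuous_prod_inv_smul_torusMap hf.continuousOn
        (fun i => mem_ball_self (hR i)) _).const_smul _
    · rw [norm_smul, norm_smul, norm_prod_inv_torusMap_sub_pow c hR]
      gcongr
      · exact Finset.prod_nonneg fun i _ => pow_nonneg (inv_nonneg.2 (hR i).le) _
      · exact hM _ (torusMap_mem_closedPolydisc c hR θ)
    · have hkernel := hasSum_prod_pow_mul_inv_pow_succ (z := fun i => z i - c i)
        (w := fun i => torusMap c R θ i - c i)
        fun i => (hz' i).trans_eq (norm_torusMap_sub c hR θ i).symm
      simpa only [sub_sub_sub_cancel_right, mul_smul] using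
        hkernel.smul_const (f (torusMap c R θ))
  have hpi : (2 * Real.pi * I : ℂ) ^ n ≠ 0 := pow_ne_zero _ Complex.two_pi_I_ne_zero
  have hscaled := hint.const_smul ((2 * Real.pi * I : ℂ) ^ n)⁻¹
  rw [torusIntegral_prod_sub_inv_smul hf hz, inv_smul_smul₀ hpi] at hscaled
  simpa only [torusIntegral_smul, cauchyCoeff, smul_comm _ (∏ i, (z i - c i) ^ _)] using hscaled

end PolydiscExpansion

section LowOrderCoefficients

open Filter Topology

variable {E : Type*} [NormedAddCommGroup E] [NormedSpace ℂ E]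

theorem hasDerivAt_zero_of_hasSum_pow_smul {g : ℂ → E} {a : ℕ → E}
    (h : ∀ᶠ t in 𝓝 (0 : ℂ), HasSum (fun k => t ^ k • a k) (g t)) : HasDerivAt g (a 1) 0 := by
  let p : FormalMultilinearSeries ℂ ℂ E := fun k =>
    ContinuousMultilinearMap.mkPiRing ℂ (Fin k) (a k)
  have hp : ∀ k, p.coeff k = a k := fun k => by simp [p, FormalMultilinearSeries.coeff]
  have hg : HasFPowerSeriesAt g p 0 := by
    simpa only [hasFPowerSeriesAt_iff, hp, zero_add] using h
  exact hp 1 ▸ hg.hasDerivAt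

variable {ι : Type*} [Fintype ι] {f : (ι → ℂ) → E} {c : (ι → ℕ) → E}

theorem coeff_zero_of_hasSum (h : HasSum (fun m => (∏ i, (0 : ℂ) ^ m i) • c m) (f 0)) :
    c 0 = f 0 := by
  refine HasSum.unique ?_ h
  convert hasSum_single (0 : ι → ℕ) fun m hm => ?_
  · simp
  · obtain ⟨i, hi⟩ := Function.ne_iff.1 hm
    rw [Finset.prod_eq_zero (Finset.mem_univ i) (zero_pow hi), zero_smul]

variable [DecidableEq ι]

theorem eq_zero_or_eq_single_of_sum_lt_two {m : ι → ℕ} (h : ∑ i, m i < 2) :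
    m = 0 ∨ ∃ i, m = Pi.single i 1 := by
  refine or_iff_not_imp_left.2 fun hm => ?_
  obtain ⟨i, hi⟩ := Function.ne_iff.1 hm
  rw [← Finset.add_sum_erase _ _ (Finset.mem_univ i)] at h
  simp only [Pi.zero_apply] at hi
  have hrest : ∑ j ∈ Finset.univ.erase i, m j = 0 := by omega
  refine ⟨i, funext fun j => ?_⟩
  rcases eq_or_ne j i with rfl | hji
  · rw [Pi.single_eq_same]; omega
  · rw [Pi.single_eq_of_ne hji]
    exact Finset.sum_eq_zero_iff.1 hrest j (Finset.mem_erase.2 ⟨hji, Finset.mem_univ j⟩)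

theorem hasSum_coeff_single {i : ι} {t : ℂ}
    (h : HasSum (fun m => (∏ j, (Pi.single i t : ι → ℂ) j ^ m j) • c m) (f (Pi.single i t))) :
    HasSum (fun k => t ^ k • c (Pi.single i k)) (f (Pi.single i t)) := by
  have hinj : Function.Injective fun k : ℕ => (Pi.single i k : ι → ℕ) :=
    Pi.single_injective (M := fun _ : ι => ℕ) i
  rw [← hinj.hasSum_iff fun m hm => ?_] at h
  · convert h using 3 with k
    change t ^ k • c (Pi.single i k) = (∏ j, _) • c (Pi.single i k)
    rw [Finset.prod_eq_single i (fun j _ hj => by simp [hj]) (by simp)]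
    simp only [Pi.single_eq_same]
  · obtain ⟨j, hj⟩ : ∃ j, m j ≠ 0 ∧ j ≠ i := by
      by_contra! hm'
      exact hm ⟨m i, funext fun j => by
        rcases eq_or_ne j i with rfl | hji
        · simp
        · simp [hji, by_contra fun h0 => hji (hm' j h0)]⟩
    rw [Finset.prod_eq_zero (Finset.mem_univ j) (by simp [hj]), zero_smul]

theorem coeff_single_one_of_hasSum (h : ∀ᶠ z in 𝓝 (0 : ι → ℂ),
    HasSum (fun m => (∏ i, z i ^ m i) • c m) (f z)) (hf : DifferentiableAt ℂ f 0) (i : ι) :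
    c (Pi.single i 1) = fderiv ℂ f 0 (Pi.single i 1) := by
  have hline : HasDerivAt (fun t : ℂ => (Pi.single i t : ι → ℂ)) (Pi.single i 1) 0 :=
    (ContinuousLinearMap.single ℂ (fun _ : ι => ℂ) i).hasDerivAt
  have hlim : Tendsto (fun t : ℂ => (Pi.single i t : ι → ℂ)) (𝓝 0) (𝓝 0) := by
    simpa using hline.continuousAt.tendsto
  refine (hasDerivAt_zero_of_hasSum_pow_smul (g := fun t => f (Pi.single i t))
    (a := fun k => c (Pi.single i k))
    ((hlim.eventually h).mono fun t ht => hasSum_coeff_single ht)).unique ?_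
  exact HasFDerivAt.comp_hasDerivAt (0 : ℂ) (by simpa using hf.hasFDerivAt) hline

end LowOrderCoefficients

section SecondOrderExpansion

open Topology

variable {ι : Type*} [Fintype ι]

variable (ι) in
/-- Multi-indices of degree at least two, indexing the monomials of a perturbation which vanishes
to second order. -/
abbrev MultiIndex : Type _ := {m : ι → ℕ // 2 ≤ ∑ i, m i}

theorem exists_hasSum_of_fderiv_eq_zero {E : Type*} [NormedAddCommGroup E] [NormedSpace ℂ E]
    [CompleteSpace E] {n : ℕ} {f : (Fin n → ℂ) → E} {b : ℝ} (hb : 0 < b)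
    (hf : DifferentiableOn ℂ f (ball 0 b)) (hf0 : f 0 = 0) (hDf : fderiv ℂ f 0 = 0) :
    ∃ R > 0, ∃ A : MultiIndex (Fin n) → E, Summable (fun m => ‖A m‖ * R ^ ∑ i, m.1 i) ∧
      ∀ z, ‖z‖ ≤ R → HasSum (fun m => (∏ i, z i ^ m.1 i) • A m) (f z) := by
  set c := cauchyCoeff f 0 fun _ => b / 2
  have hdisc : DifferentiableOn ℂ f (closedPolydisc 0 fun _ => b / 2) := hf.mono fun z hz => by
    refine mem_ball_zero_iff.2 (((pi_norm_le_iff_of_nonneg (by positivity)).2 fun i => ?_).trans_lt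
      (half_lt_self hb))
    exact mem_closedBall_zero_iff.1 (hz i trivial)
  have hexp : ∀ z, ‖z‖ < b / 2 → HasSum (fun m => (∏ i, z i ^ m i) • c m) (f z) := fun z hz => by
    simpa using hasSum_cauchyCoeff hdisc
      fun i => mem_ball_zero_iff.2 ((norm_le_pi_norm z i).trans_lt hz)
  have hlow : ∀ m ∉ Set.range (Subtype.val : MultiIndex (Fin n) → Fin n → ℕ), c m = 0 := by
    intro m hm
    have hm2 : ∑ i, m i < 2 := by simpa using hm
    rcases eq_zero_or_eq_single_of_sum_lt_two hm2 with rfl | ⟨i, rfl⟩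
    · exact (coeff_zero_of_hasSum (hexp 0 (by simpa using hb))).trans hf0
    · have hnear : ∀ᶠ z in 𝓝 (0 : Fin n → ℂ), ‖z‖ < b / 2 :=
        continuous_norm.continuousAt.eventually_lt continuousAt_const (by simpa using hb)
      rw [coeff_single_one_of_hasSum (hnear.mono hexp)
        (hf.differentiableAt (ball_mem_nhds 0 hb)), hDf, zero_apply]
  obtain ⟨M, hM⟩ := (isCompact_closedPolydisc 0 _).exists_bound_of_continuousOn hdisc.continuousOn
  refine ⟨b / 4, by positivity, fun m => c m, ?_, fun z hz => ?_⟩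
  · exact (summable_norm_cauchyCoeff_mul_pow (by positivity) (by linarith) hM).comp_injective
      Subtype.val_injective
  · refine (Subtype.val_injective.hasSum_iff fun m hm => ?_).2 (hexp z (hz.trans_lt (by linarith)))
    rw [hlow m hm, smul_zero]

end SecondOrderExpansion

section TermwiseDifferentiation

variable {E F α : Type*} [NormedAddCommGroup E] [NormedSpace ℂ E] [NormedAddCommGroup F]
  [NormedSpace ℂ F]

theorem norm_fderiv_le_of_forall_mem_ball {f : E → F} {x : E} {r M : ℝ} (hr : 0 < r)
    (hf : DifferentiableOn ℂ f (ball x r)) (hM : ∀ z ∈ ball x r, ‖f z‖ ≤ M) :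
    ‖fderiv ℂ f x‖ ≤ 2 * M / r := by
  refine Complex.norm_fderiv_le_div_of_mapsTo_ball hf (fun z hz => ?_) hr
  rw [mem_closedBall_iff_norm]
  linarith [norm_sub_le (f z) (f x), hM z hz, hM x (mem_ball_self hr)]

variable [CompleteSpace F]

theorem hasFDerivAt_tsum_of_differentiableOn {f : α → E → F} {u : α → ℝ} {U : Set E}
    (hU : IsOpen U) (hu : Summable u) (hf : ∀ a, DifferentiableOn ℂ (f a) U)
    (hfu : ∀ a, ∀ z ∈ U, ‖f a z‖ ≤ u a) {z : E} (hz : z ∈ U) :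
    HasFDerivAt (fun y => ∑' a, f a y) (∑' a, fderiv ℂ (f a) z) z := by
  obtain ⟨r, hr, hball⟩ := Metric.isOpen_iff.1 hU z hz
  have hsub : ∀ x ∈ ball z (r / 2), ball x (r / 2) ⊆ U := fun x hx =>
    (ball_subset_ball' (by linarith [mem_ball.1 hx])).trans hball
  refine hasFDerivAt_tsum_of_isPreconnected (u := fun a => 2 * u a / (r / 2))
    ((hu.mul_left 2).div_const _) isOpen_ball (convex_ball z (r / 2)).isPreconnected
    (fun a x hx => ?_) (fun a x hx => ?_) (mem_ball_self (half_pos hr))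
    (.of_norm_bounded hu fun a => hfu a z hz) (mem_ball_self (half_pos hr))
  · exact ((hf a).differentiableAt
      (hU.mem_nhds (hsub x hx (mem_ball_self (half_pos hr))))).hasFDerivAt
  · exact norm_fderiv_le_of_forall_mem_ball (half_pos hr) ((hf a).mono (hsub x hx))
      fun y hy => hfu a y (hsub x hx hy)

end TermwiseDifferentiation

section Trees

open ENNReal

variable {ι : Type*} [Fintype ι]

variable (ι) in
/-- Rooted trees with vertices coloured by `ι`, indexed by the colour of the root. An inner vertex
with multi-index `m` has `m i` children of colour `i`; its children are labelled by the pairs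
`⟨i, k⟩` with `k < m i`. These trees index the iterated substitutions of a fixed power series into
itself. -/
inductive ColoredTree : ι → Type _
  | leaf (j : ι) : ColoredTree j
  | node (j : ι) (m : MultiIndex ι) (children : ∀ s : Σ i, Fin (m.1 i), ColoredTree s.1) :
    ColoredTree j

namespace ColoredTree

/-- The number of vertices on a longest branch. -/
def height : ∀ {j : ι}, ColoredTree ι j → ℕ
  | _, leaf _ => 1
  | _, node _ _ children => (Finset.univ.sup fun s => (children s).height) + 1

section Eval

variable {R S : Type*} [CommMonoid R] [CommMonoid S]

/-- The monomial of a tree, with `z j` at each leaf of colour `j` and the coefficient `A m j` at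
each inner vertex of colour `j` and multi-index `m`. -/
def eval (A : MultiIndex ι → ι → R) (z : ι → R) : ∀ {j : ι}, ColoredTree ι j → R
  | _, leaf j => z j
  | _, node j m children => A m j * ∏ s, (children s).eval A z

theorem map_eval (φ : R →* S) (A : MultiIndex ι → ι → R) (z : ι → R) {j : ι}
    (T : ColoredTree ι j) :
    φ (T.eval A z) = T.eval (fun m i => φ (A m i)) (fun i => φ (z i)) := by
  induction T with
  | leaf => rfl
  | node j m children ih => simp only [eval, map_mul, map_prod, ih]

theorem norm_eval (A : MultiIndex ι → ι → ℂ) (z : ι → ℂ) {j : ι} (T : ColoredTree ι j) :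
    ‖T.eval A z‖ = T.eval (fun m i => ‖A m i‖) (fun i => ‖z i‖) :=
  map_eval (normHom : ℂ →*₀ ℝ).toMonoidHom A z T

theorem enorm_eval (A : MultiIndex ι → ι → ℝ) (z : ι → ℝ) {j : ι} (T : ColoredTree ι j) :
    ‖T.eval A z‖ₑ = T.eval (fun m i => ‖A m i‖ₑ) (fun i => ‖z i‖ₑ) :=
  map_eval ((ofNNRealHom : NNReal →* ℝ≥0∞).comp (nnnormHom : ℝ →*₀ NNReal).toMonoidHom) A z T

theorem eval_nonneg {A : MultiIndex ι → ι → ℝ} (hA : ∀ m i, 0 ≤ A m i) {z : ι → ℝ} (hz : 0 ≤ z)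
    {j : ι} (T : ColoredTree ι j) : 0 ≤ T.eval A z := by
  induction T with
  | leaf j => exact hz j
  | node j m children ih => exact mul_nonneg (hA m j) (Finset.prod_nonneg fun s _ => ih s)

theorem eval_mono {A : MultiIndex ι → ι → ℝ} (hA : ∀ m i, 0 ≤ A m i) {z w : ι → ℝ} (hz : 0 ≤ z)
    (hzw : z ≤ w) {j : ι} (T : ColoredTree ι j) : T.eval A z ≤ T.eval A w := by
  induction T with
  | leaf j => exact hzw j
  | node j m children ih =>
    exact mul_le_mul_of_nonneg_left
      (Finset.prod_le_prod (fun s _ => (children s).eval_nonneg hA hz) fun s _ => ih s) (hA m j)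

theorem differentiable_eval (A : MultiIndex ι → ι → ℂ) {j : ι} (T : ColoredTree ι j) :
    Differentiable ℂ fun z => T.eval A z := by
  induction T with
  | leaf j => exact differentiable_apply j
  | node j m children ih =>
    simp only [eval]
    fun_prop

end Eval

/-- A tree is a leaf or is given by the multi-index and the children of its root. -/
def rootEquiv (j : ι) :
    Unit ⊕ (Σ m : MultiIndex ι, ∀ s : Σ i, Fin (m.1 i), ColoredTree ι s.1) ≃ ColoredTree ι j where
  toFun := Sum.elim (fun _ => leaf j) fun p => node j p.1 p.2
  invFun
    | leaf _ => Sum.inl ()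
    | node _ m children => Sum.inr ⟨m, children⟩
  left_inv := by rintro (_ | _) <;> rfl
  right_inv := by rintro (_ | _) <;> rfl

theorem hasSum_of_hasSum_node {M : Type*} [AddCommMonoid M] [TopologicalSpace M] [ContinuousAdd M]
    {j : ι} {f : ColoredTree ι j → M} {a : M}
    (h : HasSum (fun p : Σ m : MultiIndex ι, ∀ s : Σ i, Fin (m.1 i), ColoredTree ι s.1 =>
      f (node j p.1 p.2)) a) : HasSum f (f (leaf j) + a) :=
  (rootEquiv j).hasSum_iff.1 ((hasSum_unique fun _ : Unit => f (leaf j)).sum h)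

theorem prod_children_eq {R : Type*} [CommMonoid R] (m : ι → ℕ) (x : ι → R) :
    ∏ s : Σ i, Fin (m i), x s.1 = ∏ i, x i ^ m i := by
  simp [Fintype.prod_sigma]

theorem tsum_eval_of_height_le {A : MultiIndex ι → ι → ℝ≥0∞} {ρ x : ι → ℝ≥0∞}
    (hx : ∀ j, ρ j + ∑' m : MultiIndex ι, A m j * ∏ i, x i ^ m.1 i ≤ x j) (k : ℕ) (j : ι) :
    ∑' T : ColoredTree ι j, (if T.height ≤ k then T.eval A ρ else 0) ≤ x j := by
  induction k generalizing j with
  | zero =>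
    have hpos : ∀ T : ColoredTree ι j, ¬ T.height ≤ 0 := by rintro (_ | _) <;> simp [height]
    simp [hpos]
  | succ k ih =>
    have hnode : ∀ m children, (if (node j m children).height ≤ k + 1 then
        (node j m children).eval A ρ else 0) =
        A m j * ∏ s, if (children s).height ≤ k then (children s).eval A ρ else 0 := by
      simp [height, eval, Finset.prod_ite_zero]
    rw [(hasSum_of_hasSum_node ENNReal.summable.hasSum).tsum_eq, ENNReal.tsum_sigma']
    simp only [hnode, ENNReal.tsum_mul_left]
    refine le_trans (add_le_add (by simp [height, eval]) ?_) (hx j)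
    refine ENNReal.tsum_le_tsum fun m => mul_le_mul_right ?_ _
    exact (tsum_prod_le_prod_tsum _).trans
      ((Finset.prod_le_prod' fun s _ => ih s.1).trans_eq (prod_children_eq m.1 x))

/-- A supersolution of the equation `x = ρ + A(x)` dominates its formal tree solution. -/
theorem tsum_eval_le {A : MultiIndex ι → ι → ℝ≥0∞} {ρ x : ι → ℝ≥0∞}
    (hx : ∀ j, ρ j + ∑' m : MultiIndex ι, A m j * ∏ i, x i ^ m.1 i ≤ x j) (j : ι) :
    ∑' T : ColoredTree ι j, T.eval A ρ ≤ x j := by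
  refine ENNReal.summable.tsum_le_of_sum_le fun F => ?_
  calc ∑ T ∈ F, T.eval A ρ
      = ∑ T ∈ F, (if T.height ≤ F.sup height then T.eval A ρ else 0) :=
        Finset.sum_congr rfl fun T hT => (if_pos (Finset.le_sup hT)).symm
    _ ≤ ∑' T : ColoredTree ι j, (if T.height ≤ F.sup height then T.eval A ρ else 0) :=
        ENNReal.sum_le_tsum F
    _ ≤ x j := tsum_eval_of_height_le hx _ j

theorem tsum_mul_prod_le (B : MultiIndex ι → ℝ≥0∞) {θ : ℝ≥0∞} (hθ : θ ≤ 1) (r : ι → ℝ≥0∞) :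
    ∑' m, B m * ∏ i, (θ * r i) ^ m.1 i ≤ θ ^ 2 * ∑' m, B m * ∏ i, r i ^ m.1 i := by
  rw [← ENNReal.tsum_mul_left]
  refine ENNReal.tsum_le_tsum fun m => ?_
  simp only [mul_pow, Finset.prod_mul_distrib, Finset.prod_pow_eq_pow_sum]
  rw [mul_left_comm]
  gcongr ?_ * _
  exact pow_le_pow_right_of_le_one' hθ m.2

theorem exists_summable_eval (A : MultiIndex ι → ι → ℂ) {R : ℝ} (hR : 0 < R)
    (hA : Summable fun m => ‖A m‖ * R ^ ∑ i, m.1 i) :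
    ∃ ρ > 0, ∀ j, Summable fun T : ColoredTree ι j =>
      T.eval (fun m i => ‖A m i‖) (fun _ => ρ) := by
  set C : ℝ≥0∞ := ∑' m, ‖A m‖ₑ * ∏ i, ENNReal.ofReal R ^ m.1 i
  have hC_ofReal : ENNReal.ofReal C.toReal = C := by
    refine ENNReal.ofReal_toReal ?_
    convert tsum_enorm_ne_top_iff_summable_norm.2 hA.norm using 4 with m
    rw [enorm_mul, enorm_norm, Finset.prod_pow_eq_pow_sum, enorm_pow,
      Real.enorm_of_nonneg hR.le]
  set θ := R / (2 * (C.toReal + R)) with hθ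
  have hcR : 0 < C.toReal + R := by positivity
  have hθ0 : 0 < θ := by positivity
  have hθ1 : θ ≤ 1 := by
    rw [hθ, div_le_one (by positivity)]
    linarith [C.toReal_nonneg]
  have hθC : θ * C.toReal ≤ R / 2 := by
    rw [hθ, div_mul_eq_mul_div, div_le_iff₀ (by positivity)]
    nlinarith
  refine ⟨θ * R / 2, by positivity, fun j => Summable.of_norm ?_⟩
  have hsuper : ∀ j, ENNReal.ofReal (θ * R / 2) + ∑' m : MultiIndex ι,
      ‖A m j‖ₑ * ∏ i, (ENNReal.ofReal θ * ENNReal.ofReal R) ^ m.1 i ≤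
      ENNReal.ofReal θ * ENNReal.ofReal R := fun j => calc
    _ ≤ ENNReal.ofReal (θ * R / 2) + ENNReal.ofReal θ ^ 2 * C := by
      gcongr
      refine (tsum_mul_prod_le _ (ENNReal.ofReal_le_one.2 hθ1) _).trans (mul_le_mul_right ?_ _)
      refine ENNReal.tsum_le_tsum fun m => mul_le_mul_left ?_ _
      exact enorm_le_iff_norm_le.2 (norm_le_pi_norm (A m) j)
    _ = ENNReal.ofReal (θ * R / 2 + θ ^ 2 * C.toReal) := by
      rw [ENNReal.ofReal_add (by positivity) (by positivity), ENNReal.ofReal_mul (by positivity),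
        ENNReal.ofReal_pow hθ0.le, hC_ofReal]
    _ ≤ _ := by
      rw [← ENNReal.ofReal_mul hθ0.le]
      exact ENNReal.ofReal_le_ofReal (by nlinarith)
  rw [← tsum_enorm_ne_top_iff_summable_norm]
  simp only [enorm_eval, enorm_norm, Real.enorm_of_nonneg (show 0 ≤ θ * R / 2 by positivity)]
  exact ne_top_of_le_ne_top (ENNReal.mul_ne_top ENNReal.ofReal_ne_top ENNReal.ofReal_ne_top)
    (tsum_eval_le hsuper j)

end ColoredTree

end Trees

section LeafCounts

variable {ι : Type*} [Fintype ι] [DecidableEq ι]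

namespace ColoredTree

/-- The number of leaves of each colour, i.e. the multi-degree of the monomial of a tree. -/
def leafCount : ∀ {j : ι}, ColoredTree ι j → ι → ℕ
  | _, leaf j => Pi.single j 1
  | _, node _ _ children => ∑ s, (children s).leafCount

/-- The number of leaves. -/
def size {j : ι} (T : ColoredTree ι j) : ℕ := ∑ i, T.leafCount i

/-- The inner vertices of a tree, each recorded as its colour together with the leaf count of the
subtree above it. -/
def nodes : ∀ {j : ι}, ColoredTree ι j → Multiset (ι × (ι → ℕ))
  | _, leaf _ => 0
  | _, node j _ children => (j, ∑ s, (children s).leafCount) ::ₘ ∑ s, (children s).nodes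

theorem size_leaf (j : ι) : (leaf j).size = 1 := by
  simp [size, leafCount]

theorem size_node (j : ι) (m : MultiIndex ι)
    (children : ∀ s : Σ i, Fin (m.1 i), ColoredTree ι s.1) :
    (node j m children).size = ∑ s, (children s).size := by
  simp only [size, leafCount, Finset.sum_apply]
  exact Finset.sum_comm

theorem card_nodes_lt_size {j : ι} (T : ColoredTree ι j) : T.nodes.card < T.size := by
  induction T with
  | leaf j => simp [nodes, size_leaf]
  | node j m children ih =>
    have hcard : 2 ≤ Fintype.card (Σ i, Fin (m.1 i)) := by simpa using m.2
    have hsum : ∑ s, ((children s).nodes.card + 1) ≤ ∑ s, (children s).size :=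
      Finset.sum_le_sum fun s _ => ih s
    rw [Finset.sum_add_distrib, Finset.sum_const, Finset.card_univ, smul_eq_mul, mul_one] at hsum
    rw [size_node, nodes, Multiset.card_cons, Multiset.card_sum]
    omega

theorem two_le_size_node (j : ι) (m : MultiIndex ι)
    (children : ∀ s : Σ i, Fin (m.1 i), ColoredTree ι s.1) : 2 ≤ (node j m children).size := by
  have := (node j m children).card_nodes_lt_size
  rw [nodes, Multiset.card_cons] at this
  omega

theorem two_le_degree_of_mem_nodes {j : ι} (T : ColoredTree ι j) {x : ι × (ι → ℕ)}
    (hx : x ∈ T.nodes) : 2 ≤ ∑ i, x.2 i := by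
  induction T with
  | leaf j => simp [nodes] at hx
  | node j m children ih =>
    rw [nodes, Multiset.mem_cons, Multiset.mem_sum] at hx
    obtain rfl | ⟨s, -, hs⟩ := hx
    · exact two_le_size_node j m children
    · exact ih s hs

theorem degree_le_size_of_mem_nodes {j : ι} (T : ColoredTree ι j) {x : ι × (ι → ℕ)}
    (hx : x ∈ T.nodes) : ∑ i, x.2 i ≤ T.size := by
  induction T with
  | leaf j => simp [nodes] at hx
  | node j m children ih =>
    rw [nodes, Multiset.mem_cons, Multiset.mem_sum] at hx
    obtain rfl | ⟨s, -, hs⟩ := hx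
    · exact le_rfl
    · rw [size_node]
      exact (ih s hs).trans (Finset.single_le_sum_of_canonicallyOrdered
        (f := fun s => (children s).size) (Finset.mem_univ s))

theorem eval_mul {R : Type*} [CommMonoid R] (A : MultiIndex ι → ι → R) (q z : ι → R) {j : ι}
    (T : ColoredTree ι j) :
    T.eval A (fun i => q i * z i) = (∏ i, q i ^ T.leafCount i) * T.eval A z := by
  induction T with
  | leaf j => simp [eval, leafCount, Pi.single_apply, pow_ite]
  | node j m children ih =>
    simp only [eval, ih, Finset.prod_mul_distrib, leafCount, Finset.sum_apply,
      ← Finset.prod_pow_eq_pow_sum]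
    rw [Finset.prod_comm, mul_left_comm]

theorem norm_eval_le (A : MultiIndex ι → ι → ℂ) {z : ι → ℂ} {c : ℝ} {x : ι → ℝ}
    (hz : ∀ i, ‖z i‖ ≤ c * x i) {j : ι} (T : ColoredTree ι j) :
    ‖T.eval A z‖ ≤ c ^ T.size * T.eval (fun m i => ‖A m i‖) x := by
  rw [norm_eval, size, ← Finset.prod_pow_eq_pow_sum, ← eval_mul]
  exact T.eval_mono (fun _ _ => norm_nonneg _) (fun _ => norm_nonneg _) hz

end ColoredTree

end LeafCounts

section CountingLemma

theorem sum_mul_add_two_mul_le {σ : Type*} [Fintype σ] {c N : σ → ℕ} {K : ℕ}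
    (h : ∀ s, c s ≠ 0 → c s * K + K ≤ 2 * N s) {s t : σ} (hst : s ≠ t) (hs : c s ≠ 0)
    (ht : c t ≠ 0) : (∑ u, c u) * K + 2 * K ≤ 2 * ∑ u, N u := by
  classical
  have hle : ∀ u, c u * K + ((Pi.single s K : σ → ℕ) u + (Pi.single t K : σ → ℕ) u) ≤ 2 * N u := by
    intro u
    obtain rfl | hus := eq_or_ne u s
    · simpa [hst] using h u hs
    obtain rfl | hut := eq_or_ne u t
    · simpa [hus] using h u ht
    by_cases hu : c u = 0
    · simp [hu, hus, hut]
    · simpa [hus, hut] using (Nat.le_add_right _ _).trans (h u hu)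
  have hsum := Finset.sum_le_sum fun u (_ : u ∈ Finset.univ) => hle u
  simp only [Finset.sum_add_distrib, ← Finset.sum_mul, ← Finset.mul_sum,
    Finset.sum_pi_single', Finset.mem_univ, if_true] at hsum
  omega

theorem sum_trichotomy {σ : Type*} [Fintype σ] {c N : σ → ℕ} {K : ℕ} {Q : σ → Prop}
    (h : ∀ s, c s = 0 ∨ c s * K + 2 * K ≤ 2 * N s ∨ c s * K + K ≤ 2 * N s ∧ Q s) :
    ∑ s, c s = 0 ∨ (∑ s, c s) * K + 2 * K ≤ 2 * ∑ s, N s ∨ ∃ s, ∑ t, c t = c s ∧ Q s := by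
  by_cases hzero : ∀ s, c s = 0
  · exact Or.inl (Finset.sum_eq_zero fun s _ => hzero s)
  obtain ⟨s, hs⟩ := not_forall.1 hzero
  by_cases hsingle : ∀ t, t ≠ s → c t = 0
  · rw [Fintype.sum_eq_single s hsingle]
    obtain h0 | hle | ⟨-, hQ⟩ := h s
    · exact absurd h0 hs
    · refine Or.inr (Or.inl (hle.trans (Nat.mul_le_mul_left 2 ?_)))
      exact Finset.single_le_sum_of_canonicallyOrdered (Finset.mem_univ s)
    · exact Or.inr (Or.inr ⟨s, rfl, hQ⟩)
  · push Not at hsingle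
    obtain ⟨t, hts, ht⟩ := hsingle
    have hweak : ∀ u, c u ≠ 0 → c u * K + K ≤ 2 * N u := fun u hu => by
      obtain h0 | hle | ⟨hle, -⟩ := h u <;> omega
    exact Or.inr (Or.inl (sum_mul_add_two_mul_le hweak hts.symm hs ht))

variable {ι : Type*} [Fintype ι] [DecidableEq ι]

namespace ColoredTree

theorem leafCount_pos {j : ι} (T : ColoredTree ι j) : 0 < T.leafCount := by
  refine pos_iff_ne_zero.2 fun h => T.card_nodes_lt_size.ne_bot ?_
  simp [size, h]

theorem leafCount_child_lt (j : ι) (m : MultiIndex ι)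
    (children : ∀ s : Σ i, Fin (m.1 i), ColoredTree ι s.1) (s : Σ i, Fin (m.1 i)) :
    (children s).leafCount < (node j m children).leafCount := by
  have hcard : 1 < Fintype.card (Σ i, Fin (m.1 i)) := by
    rw [Fintype.card_sigma]
    simp only [Fintype.card_fin]
    exact m.2
  have := Fintype.one_lt_card_iff_nontrivial.1 hcard
  obtain ⟨t, ht⟩ := exists_ne s
  exact Finset.single_lt_sum (f := fun s => (children s).leafCount) ht (Finset.mem_univ s)
    (Finset.mem_univ t) (children t).leafCount_pos fun _ _ _ => zero_le

variable {P : ι × (ι → ℕ) → Prop} [DecidablePred P] {K : ℕ}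

/-- The strengthening of `countP_nodes_mul_le` that survives induction on the tree: the surplus
`2 * K` or `K` pays for a root satisfying `P`. -/
theorem countP_nodes_trichotomy (hP : ∀ x, P x → K ≤ ∑ i, x.2 i)
    (hPP : ∀ x y, P x → P y → y.2 < x.2 → ∑ i, y.2 i + K ≤ ∑ i, x.2 i) {j : ι}
    (T : ColoredTree ι j) :
    T.nodes.countP P = 0 ∨ T.nodes.countP P * K + 2 * K ≤ 2 * T.size ∨
      ∃ y, P y ∧ y.2 ≤ T.leafCount ∧ T.nodes.countP P * K + K ≤ 2 * ∑ i, y.2 i := by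
  induction T with
  | leaf j => exact Or.inl rfl
  | node j m children ih =>
    set c := fun s => (children s).nodes.countP P
    have hchildren : ∑ s, c s = 0 ∨ (∑ s, c s) * K + 2 * K ≤ 2 * (node j m children).size ∨
        ∃ y, P y ∧ y.2 < (node j m children).leafCount ∧ (∑ s, c s) * K + K ≤ 2 * ∑ i, y.2 i := by
      rw [size_node]
      refine (sum_trichotomy fun s => (ih s).imp_right (Or.imp_right fun hy => ⟨?_, hy⟩)).imp_right
        (Or.imp_right fun ⟨s, hs, y, hy, hle, h⟩ =>
          ⟨y, hy, hle.trans_lt (leafCount_child_lt j m children s), hs ▸ h⟩)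
      obtain ⟨y, -, hle, h⟩ := hy
      exact h.trans (Nat.mul_le_mul_left 2 (Finset.sum_le_sum fun i _ => hle i))
    have hcount : (node j m children).nodes.countP P =
        ∑ s, c s + if P (j, (node j m children).leafCount) then 1 else 0 := by
      rw [nodes, Multiset.countP_cons, leafCount]
      exact congrArg (· + _) (map_sum (Multiset.countPAddMonoidHom P) _ _)
    rw [hcount]
    split_ifs with hroot
    · have hK := hP _ hroot
      refine Or.inr (Or.inr ⟨_, hroot, le_rfl, ?_⟩)
      rw [add_mul, one_mul]
      obtain h | h | ⟨y, hy, hlt, h⟩ := hchildren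
      · rw [h]; omega
      · change _ ≤ 2 * ∑ i, (node j m children).leafCount i at h
        dsimp only at hK ⊢
        omega
      · have := hPP _ y hroot hy hlt
        dsimp only at this ⊢
        omega
    · exact hchildren.imp_right (Or.imp_right fun ⟨y, hy, hlt, h⟩ => ⟨y, hy, hlt.le, h⟩)

theorem countP_nodes_mul_le (hP : ∀ x, P x → K ≤ ∑ i, x.2 i)
    (hPP : ∀ x y, P x → P y → y.2 < x.2 → ∑ i, y.2 i + K ≤ ∑ i, x.2 i) {j : ι}
    (T : ColoredTree ι j) : T.nodes.countP P * K ≤ 2 * T.size := by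
  obtain h | h | ⟨y, -, hle, h⟩ := T.countP_nodes_trichotomy hP hPP
  · simp [h]
  · exact (Nat.le_add_right _ _).trans h
  · exact (Nat.le_add_right _ _).trans (h.trans
      (Nat.mul_le_mul_left 2 (Finset.sum_le_sum fun i _ => hle i)))

end ColoredTree

end CountingLemma

section LayerCake

open Filter

theorem hasSum_one_div_sub_one_div (n : ℕ) :
    HasSum (fun k : ℕ => (1 : ℝ) / ((k + n : ℕ) + 1) - 1 / ((k + n : ℕ) + 2)) (1 / (n + 1)) := by
  have hnonneg : ∀ k : ℕ, (0 : ℝ) ≤ 1 / ((k + n : ℕ) + 1) - 1 / ((k + n : ℕ) + 2) := fun k =>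
    sub_nonneg.2 (one_div_le_one_div_of_le (by positivity) (by linarith))
  have hpartial : ∀ N : ℕ, ∑ k ∈ Finset.range N,
      ((1 : ℝ) / ((k + n : ℕ) + 1) - 1 / ((k + n : ℕ) + 2)) =
      1 / (n + 1) - 1 / ((N + n : ℕ) + 1) := fun N => by
    convert Finset.sum_range_sub' (fun k : ℕ => (1 : ℝ) / ((k + n : ℕ) + 1)) N using 2
    · push_cast; ring
    · simp
  rw [hasSum_iff_tendsto_nat_of_nonneg hnonneg]
  simp only [hpartial]
  simpa using (tendsto_one_div_add_atTop_nhds_zero_nat (𝕜 := ℝ)).comp (tendsto_add_atTop_nat n)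
    |>.const_sub (1 / (n + 1 : ℝ))

variable {L : ℕ → ℝ}

theorem sum_range_sub_div_eq (L : ℕ → ℝ) (n : ℕ) :
    L 0 + ∑ k ∈ Finset.range n, (L (k + 1) - L k) / (k + 2) =
      ∑ k ∈ Finset.range n, ((1 : ℝ) / (k + 1) - 1 / (k + 2)) * L k + 1 / (n + 1) * L n := by
  induction n with
  | zero => simp
  | succ n ih =>
    rw [Finset.sum_range_succ, Finset.sum_range_succ, ← add_assoc, ih]
    push_cast
    rw [add_assoc (n : ℝ) 1 1, one_add_one_eq_two]
    ring

theorem sum_range_sub_div_le_tsum (hL : Monotone L)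
    (hs : Summable fun k : ℕ => ((1 : ℝ) / (k + 1) - 1 / (k + 2)) * L k) (n : ℕ) :
    L 0 + ∑ k ∈ Finset.range n, (L (k + 1) - L k) / (k + 2) ≤
      ∑' k : ℕ, ((1 : ℝ) / (k + 1) - 1 / (k + 2)) * L k := by
  rw [sum_range_sub_div_eq, ← hs.sum_add_tsum_nat_add n]
  gcongr
  refine hasSum_le (fun k => ?_) ((hasSum_one_div_sub_one_div n).mul_right (L n))
    ((summable_nat_add_iff n).2 hs).hasSum
  refine mul_le_mul_of_nonneg_left (hL (Nat.le_add_left n k)) (sub_nonneg.2 ?_)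
  exact one_div_le_one_div_of_le (by positivity) (by linarith)

theorem le_add_sum_ite_lt (hL : Monotone L) {N : ℕ} {x : ℝ} (hx : x ≤ L N) :
    x ≤ L 0 + ∑ k ∈ Finset.range N, if L k < x then L (k + 1) - L k else 0 := by
  induction N with
  | zero => simpa using hx
  | succ N ih =>
    rw [Finset.sum_range_succ]
    obtain hxN | hxN := le_or_gt x (L N)
    · rw [if_neg hxN.not_gt, add_zero]
      exact ih hxN
    · have hall : ∀ k ∈ Finset.range N, (if L k < x then L (k + 1) - L k else 0) =
          L (k + 1) - L k := fun k hk =>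
        if_pos ((hL (Finset.mem_range.1 hk).le).trans_lt hxN)
      rw [if_pos hxN, Finset.sum_congr rfl hall, Finset.sum_range_sub]
      linarith

theorem sum_le_card_mul_add_sum_countP (hL : Monotone L) {N : ℕ} {s : Multiset ℝ}
    (hs : ∀ x ∈ s, x ≤ L N) :
    s.sum ≤ s.card * L 0 +
      ∑ k ∈ Finset.range N, s.countP (L k < ·) * (L (k + 1) - L k) := by
  induction s using Multiset.induction_on with
  | empty => simp
  | cons x s ih =>
    have hx := le_add_sum_ite_lt hL (hs x (Multiset.mem_cons_self x s))
    have hrest := ih fun y hy => hs y (Multiset.mem_cons_of_mem hy)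
    simp only [Multiset.sum_cons, Multiset.card_cons, Multiset.countP_cons, Nat.cast_add,
      Nat.cast_ite, Nat.cast_one, Nat.cast_zero, add_mul, one_mul, ite_mul, zero_mul,
      Finset.sum_add_distrib]
    linarith

theorem sum_le_two_mul_tsum_mul (hL : Monotone L) (hL0 : 0 ≤ L 0)
    (hsum : Summable fun k : ℕ => ((1 : ℝ) / (k + 1) - 1 / (k + 2)) * L k) {s : Multiset ℝ}
    {M N : ℕ} (hs : ∀ x ∈ s, x ≤ L N) (hcard : s.card ≤ M)
    (hcount : ∀ k, s.countP (L k < ·) * (k + 2) ≤ 2 * M) :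
    s.sum ≤ 2 * (∑' k : ℕ, ((1 : ℝ) / (k + 1) - 1 / (k + 2)) * L k) * M := by
  have hterm : ∀ k, (s.countP (L k < ·) : ℝ) * (L (k + 1) - L k) ≤
      2 * M * ((L (k + 1) - L k) / (k + 2)) := fun k => by
    have hk : (s.countP (L k < ·) : ℝ) ≤ 2 * M / (k + 2) := by
      rw [le_div_iff₀ (by positivity)]
      exact_mod_cast hcount k
    calc _ ≤ 2 * M / (k + 2) * (L (k + 1) - L k) :=
          mul_le_mul_of_nonneg_right hk (sub_nonneg.2 (hL k.le_succ))
      _ = _ := by ring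
  calc s.sum
      ≤ s.card * L 0 + ∑ k ∈ Finset.range N, s.countP (L k < ·) * (L (k + 1) - L k) :=
        sum_le_card_mul_add_sum_countP hL hs
    _ ≤ 2 * M * L 0 + ∑ k ∈ Finset.range N, 2 * M * ((L (k + 1) - L k) / (k + 2)) := by
        have : (s.card : ℝ) ≤ 2 * M := by exact_mod_cast hcard.trans (by omega)
        exact add_le_add (by gcongr) (Finset.sum_le_sum fun k _ => hterm k)
    _ = 2 * M * (L 0 + ∑ k ∈ Finset.range N, (L (k + 1) - L k) / (k + 2)) := by
        rw [← Finset.mul_sum, mul_add]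
    _ ≤ 2 * M * ∑' k : ℕ, ((1 : ℝ) / (k + 1) - 1 / (k + 2)) * L k := by
        gcongr
        exact sum_range_sub_div_le_tsum hL hsum N
    _ = _ := by ring

end LayerCake

section SmallDivisors

theorem infDist_intsC_eq_norm_mk (x : ℂ) :
    infDist x intsC = ‖(x : ℂ ⧸ (Int.castAddHom ℂ).range)‖ := by
  rw [QuotientAddGroup.norm_mk]
  rfl

theorem infDist_intsC_sub_le (x y : ℂ) :
    infDist (x - y) intsC ≤ infDist x intsC + infDist y intsC := by
  simp only [infDist_intsC_eq_norm_mk, QuotientAddGroup.mk_sub]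
  exact norm_sub_le _ _

theorem infDist_intsC_pos {x : ℂ} (hx : exp (2 * Real.pi * I * x) ≠ 1) : 0 < infDist x intsC := by
  have hclosed : IsClosed intsC := Complex.isClosed_range_intCast
  refine (hclosed.notMem_iff_infDist_pos ⟨_, 0, rfl⟩).1 ?_
  rintro ⟨n, rfl⟩
  exact hx (exp_eq_one_iff.2 ⟨n, mul_comm _ _⟩)

theorem min_infDist_intsC_le_norm_exp_sub_one (x : ℂ) :
    min (1 / 2) (infDist x intsC) ≤ ‖exp (2 * Real.pi * I * x) - 1‖ := by
  set u := exp (2 * Real.pi * I * x) with hu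
  obtain h | h := le_or_gt ‖u - 1‖ (1 / 2)
  · refine min_le_of_right_le ?_
    have hlog := norm_log_one_add_half_le_self h
    rw [add_sub_cancel] at hlog
    obtain ⟨n, hn⟩ := exp_eq_exp_iff_exists_int.1 (hu.symm.trans (exp_log (exp_ne_zero _)).symm)
    have hlog_eq : log u = 2 * Real.pi * I * (x - n) := by
      rw [mul_sub, hn]
      ring
    have hnorm : ‖log u‖ = 2 * Real.pi * ‖x - n‖ := by
      rw [hlog_eq, norm_mul]
      simp [abs_of_pos Real.pi_pos]
    have hdist : infDist x intsC ≤ ‖x - n‖ := by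
      rw [← dist_eq_norm]
      exact infDist_le_dist_of_mem ⟨n, rfl⟩
    nlinarith [Real.pi_gt_three, norm_nonneg (x - n), norm_nonneg (u - 1)]
  · exact min_le_of_left_le h.le

section Frequency

variable {ι : Type*} [Fintype ι]

/-- The frequency `m · λ - λ_j` of the pair `x = (j, m)`. -/
def frequency (lam : ι → ℂ) (x : ι × (ι → ℕ)) : ℂ := (∑ i, (x.2 i : ℂ) * lam i) - lam x.1

/-- The small divisor `q^m / q_j - 1` of the pair `x = (j, m)`. -/
def smallDivisor (q : ι → ℂ) (x : ι × (ι → ℕ)) : ℂ := (∏ i, q i ^ x.2 i) / q x.1 - 1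

theorem smallDivisor_eq_exp_sub_one {lam q : ι → ℂ}
    (hq : ∀ j, q j = exp (2 * Real.pi * I * lam j)) (x : ι × (ι → ℕ)) :
    smallDivisor q x = exp (2 * Real.pi * I * frequency lam x) - 1 := by
  rw [smallDivisor, frequency, mul_sub, exp_sub, ← hq, Finset.mul_sum, exp_sum]
  congr 2
  refine Finset.prod_congr rfl fun i _ => ?_
  rw [hq, ← exp_nat_mul]
  congr 1
  ring

theorem frequency_sub [DecidableEq ι] (lam : ι → ℂ) {x y : ι × (ι → ℕ)} (hxy : y.2 ≤ x.2) :
    frequency lam (x.1, x.2 - y.2 + Pi.single y.1 1) = frequency lam x - frequency lam y := by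
  have hterm : ∀ i, (((x.2 - y.2 + Pi.single y.1 1 : ι → ℕ) i : ℕ) : ℂ) * lam i =
      x.2 i * lam i - y.2 i * lam i + if i = y.1 then lam i else 0 := by
    intro i
    rw [Pi.add_apply, Pi.sub_apply, Nat.cast_add, Nat.cast_sub (hxy i), Pi.single_apply]
    split_ifs <;> simp [sub_mul, add_mul]
  simp only [frequency, hterm, Finset.sum_add_distrib, Finset.sum_sub_distrib,
    Finset.sum_ite_eq', Finset.mem_univ, if_true]
  ring

end Frequency

variable {ν : ℕ} {lam q : Fin ν → ℂ}

theorem smallDivisor_ne_zero (hq : ∀ j, q j ≠ 0) (hres : NonResonantQ q)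
    {x : Fin ν × (Fin ν → ℕ)} (hx : 2 ≤ ∑ i, x.2 i) : smallDivisor q x ≠ 0 := by
  rw [smallDivisor, sub_ne_zero, Ne, div_eq_one_iff_eq (hq x.1)]
  exact (hres x.1 x.2 hx).symm

theorem omegaD_le_one (lam : Fin ν → ℂ) (k : ℕ) : omegaD lam k ≤ 1 := by
  refine csInf_le ⟨0, ?_⟩ (Or.inl rfl)
  rintro x (rfl | ⟨j, m, -, -, rfl⟩)
  exacts [zero_le_one, infDist_nonneg]

theorem omegaD_le_infDist (lam : Fin ν → ℂ) {k : ℕ} {x : Fin ν × (Fin ν → ℕ)}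
    (hx : 2 ≤ ∑ i, x.2 i) (hxk : ∑ i, x.2 i ≤ k + 1) :
    omegaD lam k ≤ infDist (frequency lam x) intsC := by
  refine csInf_le ⟨0, ?_⟩ (Or.inr ⟨x.1, x.2, hx, hxk, rfl⟩)
  rintro x (rfl | ⟨j, m, -, -, rfl⟩)
  exacts [zero_le_one, infDist_nonneg]

theorem omegaD_mem (lam : Fin ν → ℂ) (k : ℕ) :
    omegaD lam k = 1 ∨ ∃ x : Fin ν × (Fin ν → ℕ), 2 ≤ ∑ i, x.2 i ∧ ∑ i, x.2 i ≤ k + 1 ∧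
      omegaD lam k = infDist (frequency lam x) intsC := by
  have hfin : {x : ℝ | ∃ j : Fin ν, ∃ m : Fin ν → ℕ, 2 ≤ ∑ i, m i ∧ ∑ i, m i ≤ k + 1 ∧
      x = infDist ((∑ i, (m i : ℂ) * lam i) - lam j) intsC}.Finite := by
    refine ((Set.finite_univ.prod (Set.finite_Iic fun _ => k + 1)).image
      fun x => infDist (frequency lam x) intsC).subset ?_
    rintro _ ⟨j, m, -, hm, rfl⟩
    exact ⟨(j, m), ⟨trivial, fun i =>
      (Finset.single_le_sum_of_canonicallyOrdered (Finset.mem_univ i)).trans hm⟩, rfl⟩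
  obtain h | ⟨j, m, h2, hk, h⟩ :=
    (Set.singleton_nonempty (1 : ℝ)).inl.csInf_mem ((Set.finite_singleton 1).union hfin)
  · exact Or.inl h
  · exact Or.inr ⟨(j, m), h2, hk, h⟩

theorem antitone_omegaD (lam : Fin ν → ℂ) : Antitone (omegaD lam) := by
  intro k l hkl
  obtain h | ⟨x, h2, hk, h⟩ := omegaD_mem lam k
  · exact (omegaD_le_one lam l).trans_eq h.symm
  · exact (omegaD_le_infDist lam h2 (by omega)).trans_eq h.symm

theorem omegaD_pos (hq : ∀ j, q j = exp (2 * Real.pi * I * lam j)) (hres : NonResonantQ q)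
    (k : ℕ) : 0 < omegaD lam k := by
  obtain h | ⟨x, h2, -, h⟩ := omegaD_mem lam k
  · exact h ▸ one_pos
  · rw [h]
    refine infDist_intsC_pos (sub_ne_zero.1 ?_)
    rw [← smallDivisor_eq_exp_sub_one hq]
    exact smallDivisor_ne_zero (fun j => hq j ▸ exp_ne_zero _) hres h2

theorem omegaD_le_two_mul_norm_smallDivisor (hq : ∀ j, q j = exp (2 * Real.pi * I * lam j))
    {k : ℕ} {x : Fin ν × (Fin ν → ℕ)} (hx : 2 ≤ ∑ i, x.2 i) (hxk : ∑ i, x.2 i ≤ k + 1) :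
    omegaD lam k ≤ 2 * ‖smallDivisor q x‖ := by
  have hmin := min_infDist_intsC_le_norm_exp_sub_one (frequency lam x)
  rw [← smallDivisor_eq_exp_sub_one hq] at hmin
  have := omegaD_le_one lam k
  have := omegaD_le_infDist lam hx hxk
  have : 0 ≤ infDist (frequency lam x) intsC := infDist_nonneg
  obtain h | h := min_le_iff.1 hmin <;> linarith

theorem infDist_frequency_lt (hq : ∀ j, q j = exp (2 * Real.pi * I * lam j)) {k : ℕ}
    {x : Fin ν × (Fin ν → ℕ)} (hx : 2 * ‖smallDivisor q x‖ < omegaD lam k) :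
    infDist (frequency lam x) intsC < omegaD lam k / 2 := by
  have hmin := min_infDist_intsC_le_norm_exp_sub_one (frequency lam x)
  rw [← smallDivisor_eq_exp_sub_one hq] at hmin
  have := omegaD_le_one lam k
  obtain h | h := min_le_iff.1 hmin <;> linarith

/-- Two divisors that are small at the same level `k` differ by a multi-index of degree at least
`k + 1`, because the difference of their frequencies is again a frequency. -/
theorem degree_add_le_of_smallDivisor (hq : ∀ j, q j = exp (2 * Real.pi * I * lam j)) {k : ℕ}
    {x y : Fin ν × (Fin ν → ℕ)} (hx : 2 * ‖smallDivisor q x‖ < omegaD lam k)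
    (hy : 2 * ‖smallDivisor q y‖ < omegaD lam k) (hyx : y.2 < x.2) :
    ∑ i, y.2 i + (k + 1) ≤ ∑ i, x.2 i := by
  have hdeg : ∑ i, (x.2 - y.2 + Pi.single y.1 1 : Fin ν → ℕ) i + ∑ i, y.2 i =
      ∑ i, x.2 i + 1 := by
    have hi : ∀ i, (x.2 - y.2 : Fin ν → ℕ) i + y.2 i = x.2 i := fun i =>
      Nat.sub_add_cancel (hyx.le i)
    simp only [Pi.add_apply, Finset.sum_add_distrib, ← Finset.sum_congr rfl fun i _ => hi i,
      Finset.sum_pi_single', Finset.mem_univ, if_true]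
    ring
  have hlt : ∑ i, y.2 i < ∑ i, x.2 i := Fintype.sum_strictMono hyx
  by_contra! hcon
  have hle := omegaD_le_infDist lam (k := k) (x := (x.1, x.2 - y.2 + Pi.single y.1 1))
    (by dsimp only; omega) (by dsimp only; omega)
  rw [frequency_sub lam hyx.le] at hle
  have := infDist_intsC_sub_le (frequency lam x) (frequency lam y)
  linarith [infDist_frequency_lt hq hx, infDist_frequency_lt hq hy]

theorem countP_smallDivisor_mul_le (hq : ∀ j, q j = exp (2 * Real.pi * I * lam j)) (k : ℕ)
    {j : Fin ν} (T : ColoredTree (Fin ν) j) :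
    T.nodes.countP (fun x => 2 ≤ ∑ i, x.2 i ∧ 2 * ‖smallDivisor q x‖ < omegaD lam k) * (k + 1) ≤
      2 * T.size := by
  refine T.countP_nodes_mul_le ?_ ?_
  · rintro x ⟨h2, hx⟩
    by_contra! hcon
    exact hx.not_ge (omegaD_le_two_mul_norm_smallDivisor hq h2 hcon.le)
  · rintro x y ⟨-, hx⟩ ⟨-, hy⟩
    exact degree_add_le_of_smallDivisor hq hx hy

end SmallDivisors

section BrunoEstimate

variable {ν : ℕ} {lam q : Fin ν → ℂ}

theorem two_mul_norm_smallDivisor_pos (hq : ∀ j, q j = exp (2 * Real.pi * I * lam j))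
    (hres : NonResonantQ q) {x : Fin ν × (Fin ν → ℕ)} (hx : 2 ≤ ∑ i, x.2 i) :
    0 < 2 * ‖smallDivisor q x‖ :=
  mul_pos two_pos (norm_pos_iff.2
    (smallDivisor_ne_zero (fun j => hq j ▸ exp_ne_zero _) hres hx))

theorem countP_neg_log_smallDivisor_mul_le
    (hq : ∀ j, q j = exp (2 * Real.pi * I * lam j)) (hres : NonResonantQ q) (k : ℕ) {j : Fin ν}
    (T : ColoredTree (Fin ν) j) :
    (T.nodes.map fun x => -Real.log (2 * ‖smallDivisor q x‖)).countP
      (Real.log (1 / omegaD lam (k + 1)) < ·) * (k + 2) ≤ 2 * T.size := by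
  refine le_trans (Nat.mul_le_mul_right _ ?_) (countP_smallDivisor_mul_le hq (k + 1) T)
  rw [Multiset.countP_map, ← Multiset.countP_eq_card_filter]
  refine (Multiset.countP_congr rfl fun x hx => ?_).le
  have hx2 := T.two_le_degree_of_mem_nodes hx
  simp only [hx2, true_and, one_div, Real.log_inv, neg_lt_neg_iff, eq_iff_iff]
  exact Real.log_lt_log_iff (two_mul_norm_smallDivisor_pos hq hres hx2) (omegaD_pos hq hres _)

theorem sum_neg_log_smallDivisor_le (hq : ∀ j, q j = exp (2 * Real.pi * I * lam j))
    (hres : NonResonantQ q) (hB : Summable (brunoTermD lam)) {j : Fin ν}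
    (T : ColoredTree (Fin ν) j) :
    (T.nodes.map fun x => -Real.log (2 * ‖smallDivisor q x‖)).sum ≤
      2 * (∑' k, brunoTermD lam k) * T.size := by
  have hpos := omegaD_pos hq hres
  have hL : Monotone fun k => Real.log (1 / omegaD lam (k + 1)) := fun k l hkl =>
    Real.log_le_log (one_div_pos.2 (hpos _))
      (one_div_le_one_div_of_le (hpos _) (antitone_omegaD lam (by omega)))
  have hL0 : 0 ≤ Real.log (1 / omegaD lam (0 + 1)) :=
    Real.log_nonneg ((one_le_div (hpos _)).2 (omegaD_le_one lam _))
  refine sum_le_two_mul_tsum_mul (N := T.size) hL hL0 hB (fun y hy => ?_) ?_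
    fun k => countP_neg_log_smallDivisor_mul_le hq hres k T
  · obtain ⟨x, hx, rfl⟩ := Multiset.mem_map.1 hy
    rw [one_div, Real.log_inv, neg_le_neg_iff]
    refine Real.log_le_log (hpos _) (omegaD_le_two_mul_norm_smallDivisor hq
      (T.two_le_degree_of_mem_nodes hx) ?_)
    have := T.degree_le_size_of_mem_nodes hx
    omega
  · rw [Multiset.card_map]
    exact T.card_nodes_lt_size.le

theorem exists_pow_size_le_norm_prod_smallDivisor
    (hq : ∀ j, q j = exp (2 * Real.pi * I * lam j)) (hres : NonResonantQ q)
    (hB : Summable (brunoTermD lam)) :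
    ∃ δ > 0, ∀ j (T : ColoredTree (Fin ν) j),
      δ ^ T.size ≤ ‖(T.nodes.map (smallDivisor q)).prod‖ := by
  set S := ∑' k, brunoTermD lam k
  refine ⟨Real.exp (-(2 * S)) / 2, by positivity, fun j T => ?_⟩
  have hpos : ∀ x ∈ T.nodes, 0 < 2 * ‖smallDivisor q x‖ := fun x hx =>
    two_mul_norm_smallDivisor_pos hq hres (T.two_le_degree_of_mem_nodes hx)
  have hexp : Real.exp (-(T.nodes.map fun x => -Real.log (2 * ‖smallDivisor q x‖)).sum) =
      2 ^ T.nodes.card * ‖(T.nodes.map (smallDivisor q)).prod‖ := by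
    have hnorm : ‖(T.nodes.map (smallDivisor q)).prod‖ =
        (T.nodes.map fun x => ‖smallDivisor q x‖).prod :=
      (map_multiset_prod (normHom : ℂ →*₀ ℝ) _).trans
        (congrArg _ (Multiset.map_map _ _ T.nodes))
    rw [← Multiset.sum_map_neg, Real.exp_multiset_sum]
    simp only [Multiset.map_map, Function.comp_def, neg_neg]
    rw [Multiset.map_congr rfl fun x hx => Real.exp_log (hpos x hx), Multiset.prod_map_mul,
      Multiset.map_const', Multiset.prod_replicate, hnorm]
  have hbound : Real.exp (-(2 * S)) ^ T.size ≤
      2 ^ T.size * ‖(T.nodes.map (smallDivisor q)).prod‖ := calc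
    _ = Real.exp (-(2 * S * T.size)) := by rw [← Real.exp_nat_mul]; congr 1; ring
    _ ≤ 2 ^ T.nodes.card * ‖(T.nodes.map (smallDivisor q)).prod‖ := by
      rw [← hexp, Real.exp_le_exp, neg_le_neg_iff]
      exact sum_neg_log_smallDivisor_le hq hres hB T
    _ ≤ _ := by
      gcongr
      exacts [one_le_two, T.card_nodes_lt_size.le]
  rwa [div_pow, div_le_iff₀' (by positivity)]

end BrunoEstimate

section Linearization

open Topology Asymptotics

variable {ι : Type*} [Fintype ι] [DecidableEq ι]

/-- The contribution of a tree to the formal linearization: its monomial divided by the small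
divisors of its inner vertices. -/
def treeTerm (q : ι → ℂ) (A : MultiIndex ι → ι → ℂ) (z : ι → ℂ) {j : ι} (T : ColoredTree ι j) : ℂ :=
  T.eval A z / (T.nodes.map (smallDivisor q)).prod

/-- The tree expansion of the map `h` tangent to the identity that linearizes
`z ↦ q (z + ∑ A m z^m)`. -/
def treeSeries (q : ι → ℂ) (A : MultiIndex ι → ι → ℂ) (z : ι → ℂ) (j : ι) : ℂ :=
  ∑' T : ColoredTree ι j, treeTerm q A z T

variable {q : ι → ℂ} {A : MultiIndex ι → ι → ℂ} {z : ι → ℂ}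

theorem treeTerm_leaf (q : ι → ℂ) (A : MultiIndex ι → ι → ℂ) (z : ι → ℂ) (j : ι) :
    treeTerm q A z (.leaf j) = z j := by
  simp [treeTerm, ColoredTree.eval, ColoredTree.nodes]

theorem treeTerm_node (q : ι → ℂ) (A : MultiIndex ι → ι → ℂ) (z : ι → ℂ) (j : ι)
    (m : MultiIndex ι) (children : ∀ s : Σ i, Fin (m.1 i), ColoredTree ι s.1) :
    treeTerm q A z (.node j m children) =
      A m j / smallDivisor q (j, (ColoredTree.node j m children).leafCount) *
        ∏ s, treeTerm q A z (children s) := by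
  have hsum : (∑ s, (children s).nodes).map (smallDivisor q) =
      ∑ s, (children s).nodes.map (smallDivisor q) :=
    map_sum (Multiset.mapAddMonoidHom (smallDivisor q)) _ _
  simp only [treeTerm, ColoredTree.eval, ColoredTree.nodes, ColoredTree.leafCount,
    Multiset.map_cons, Multiset.prod_cons, hsum, Multiset.prod_sum, Finset.prod_div_distrib,
    mul_div_mul_comm]

theorem treeTerm_mul (q : ι → ℂ) (A : MultiIndex ι → ι → ℂ) (z : ι → ℂ) {j : ι}
    (T : ColoredTree ι j) :
    treeTerm q A (fun i => q i * z i) T = (∏ i, q i ^ T.leafCount i) * treeTerm q A z T := by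
  rw [treeTerm, T.eval_mul, mul_div_assoc, treeTerm]

theorem treeTerm_mul_div_sub_treeTerm
    (hdiv : ∀ x : ι × (ι → ℕ), 2 ≤ ∑ i, x.2 i → smallDivisor q x ≠ 0) (j : ι) (m : MultiIndex ι)
    (children : ∀ s : Σ i, Fin (m.1 i), ColoredTree ι s.1) :
    treeTerm q A (fun i => q i * z i) (.node j m children) / q j -
      treeTerm q A z (.node j m children) = A m j * ∏ s, treeTerm q A z (children s) := by
  set T := ColoredTree.node j m children
  calc _ = smallDivisor q (j, T.leafCount) * treeTerm q A z T := by
        rw [treeTerm_mul, smallDivisor]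
        ring
    _ = _ := by
        have hne := hdiv (j, T.leafCount) (ColoredTree.two_le_size_node j m children)
        rw [treeTerm_node, ← mul_assoc, mul_div_cancel₀ _ hne]

theorem norm_treeTerm_le {c : ℝ} (hc : 0 < c) {j : ι} (T : ColoredTree ι j)
    (hdiv : c ^ T.size ≤ ‖(T.nodes.map (smallDivisor q)).prod‖) {x : ι → ℝ}
    (hz : ∀ i, ‖z i‖ ≤ c * x i) :
    ‖treeTerm q A z T‖ ≤ T.eval (fun m i => ‖A m i‖) x := by
  rw [treeTerm, norm_div, div_le_iff₀ ((pow_pos hc _).trans_le hdiv), mul_comm]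
  have hx : 0 ≤ x := fun i =>
    (mul_nonneg_iff_of_pos_left hc).1 ((norm_nonneg (z i)).trans (hz i))
  exact (T.norm_eval_le A hz).trans
    (mul_le_mul_of_nonneg_right hdiv (T.eval_nonneg (fun _ _ => norm_nonneg _) hx))

theorem differentiable_treeTerm (q : ι → ℂ) (A : MultiIndex ι → ι → ℂ) {j : ι}
    (T : ColoredTree ι j) : Differentiable ℂ fun z => treeTerm q A z T :=
  (T.differentiable_eval A).mul_const (T.nodes.map (smallDivisor q)).prod⁻¹

theorem hasFDerivAt_treeTerm_leaf (q : ι → ℂ) (A : MultiIndex ι → ι → ℂ) (z : ι → ℂ) (j : ι) :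
    HasFDerivAt (fun y => treeTerm q A y (.leaf j)) (.proj j : (ι → ℂ) →L[ℂ] ℂ) z := by
  simp only [treeTerm_leaf]
  exact hasFDerivAt_apply j z

theorem norm_eval_le_norm_pow (A : MultiIndex ι → ι → ℂ) (z : ι → ℂ) {j : ι}
    (T : ColoredTree ι j) :
    ‖T.eval A z‖ ≤ ‖z‖ ^ T.size * T.eval (fun m i => ‖A m i‖) 1 :=
  T.norm_eval_le A fun i => by simpa using norm_le_pi_norm z i

theorem treeTerm_zero (q : ι → ℂ) (A : MultiIndex ι → ι → ℂ) {j : ι} (T : ColoredTree ι j) :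
    treeTerm q A 0 T = 0 := by
  have h := norm_eval_le_norm_pow A 0 T
  rw [norm_zero, zero_pow (Nat.zero_lt_of_lt T.card_nodes_lt_size).ne', zero_mul] at h
  rw [treeTerm, norm_le_zero_iff.1 h, zero_div]

theorem hasFDerivAt_treeTerm_node_zero (q : ι → ℂ) (A : MultiIndex ι → ι → ℂ) (j : ι)
    (m : MultiIndex ι) (children : ∀ s : Σ i, Fin (m.1 i), ColoredTree ι s.1) :
    HasFDerivAt (fun z => treeTerm q A z (.node j m children)) (0 : (ι → ℂ) →L[ℂ] ℂ) 0 := by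
  set T := ColoredTree.node j m children
  have hO : (fun z => T.eval A z) =O[𝓝 0] fun z : ι → ℂ => ‖z - 0‖ ^ T.size :=
    .of_bound (T.eval (fun m i => ‖A m i‖) 1) <| .of_forall fun z => by
      simpa [mul_comm] using norm_eval_le_norm_pow A z T
  have hlt : 1 < T.size := ColoredTree.two_le_size_node j m children
  have h := (hO.hasFDerivAt (𝕜 := ℂ) hlt).mul_const (T.nodes.map (smallDivisor q)).prod⁻¹
  simpa only [treeTerm, div_eq_mul_inv] using h.congr_fderiv (by ext; simp)

/-- Normal convergence of the tree expansion on `U`. -/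
def TreeSeriesConvergesOn (q : ι → ℂ) (A : MultiIndex ι → ι → ℂ) (U : Set (ι → ℂ)) : Prop :=
  ∀ j, ∃ u : ColoredTree ι j → ℝ, Summable u ∧ ∀ T, ∀ z ∈ U, ‖treeTerm q A z T‖ ≤ u T

theorem treeSeries_zero (q : ι → ℂ) (A : MultiIndex ι → ι → ℂ) : treeSeries q A 0 = 0 := by
  funext j
  simp only [treeSeries, treeTerm_zero, tsum_zero, Pi.zero_apply]

namespace TreeSeriesConvergesOn

variable {U : Set (ι → ℂ)}

theorem summable_norm (h : TreeSeriesConvergesOn q A U) (hz : z ∈ U) (j : ι) :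
    Summable fun T : ColoredTree ι j => ‖treeTerm q A z T‖ := by
  obtain ⟨u, hu, hle⟩ := h j
  exact .of_nonneg_of_le (fun _ => norm_nonneg _) (fun T => hle T z hz) hu

theorem hasFDerivAt (h : TreeSeriesConvergesOn q A U) (hU : IsOpen U) (hz : z ∈ U) (j : ι) :
    HasFDerivAt (fun y => treeSeries q A y j)
      (∑' T : ColoredTree ι j, fderiv ℂ (fun y => treeTerm q A y T) z) z := by
  obtain ⟨u, hu, hle⟩ := h j
  exact hasFDerivAt_tsum_of_differentiableOn hU hu
    (fun T => (differentiable_treeTerm q A T).differentiableOn) hle hz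

theorem differentiableOn (h : TreeSeriesConvergesOn q A U) (hU : IsOpen U) :
    DifferentiableOn ℂ (treeSeries q A) U := fun _ hz =>
  (differentiableAt_pi.2 fun j => (h.hasFDerivAt hU hz j).differentiableAt).differentiableWithinAt

theorem hasFDerivAt_zero (h : TreeSeriesConvergesOn q A U) (hU : IsOpen U) (h0 : 0 ∈ U) :
    HasFDerivAt (treeSeries q A) (.id ℂ (ι → ℂ)) 0 := by
  refine hasFDerivAt_pi'.2 fun j => ?_
  have hleaf : fderiv ℂ (fun y => treeTerm q A y (.leaf j)) 0 = .proj j :=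
    (hasFDerivAt_treeTerm_leaf q A 0 j).fderiv
  have hother : ∀ T : ColoredTree ι j, T ≠ .leaf j →
      fderiv ℂ (fun y => treeTerm q A y T) 0 = 0 := by
    rintro (_ | ⟨_, m, children⟩) hT
    · exact absurd rfl hT
    · exact (hasFDerivAt_treeTerm_node_zero q A j m children).fderiv
  rw [ContinuousLinearMap.comp_id, ← hleaf, ← (hasSum_single _ hother).tsum_eq]
  exact h.hasFDerivAt hU h0 j

theorem linearizes (h : TreeSeriesConvergesOn q A U) (hq : ∀ j, q j ≠ 0)
    (hdiv : ∀ x : ι × (ι → ℕ), 2 ≤ ∑ i, x.2 i → smallDivisor q x ≠ 0) (hz : z ∈ U)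
    (hqz : (fun i => q i * z i) ∈ U) {w : ι → ℂ}
    (hw : HasSum (fun m => (∏ i, treeSeries q A z i ^ m.1 i) • A m) w) :
    (fun i => q i * (treeSeries q A z i + w i)) = treeSeries q A fun i => q i * z i := by
  funext j
  have hsummable_node : ∀ {z}, z ∈ U → Summable fun p : Σ m : MultiIndex ι,
      ∀ s : Σ i, Fin (m.1 i), ColoredTree ι s.1 => treeTerm q A z (.node j p.1 p.2) := fun hz =>
    (h.summable_norm hz j).of_norm.comp_injective
      ((ColoredTree.rootEquiv j).injective.comp Sum.inr_injective)
  have hdiff := ((hsummable_node hqz).hasSum.div_const (q j)).sub (hsummable_node hz).hasSum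
  simp only [treeTerm_mul_div_sub_treeTerm hdiv] at hdiff
  have hfiber : ∀ m : MultiIndex ι, HasSum
      (fun children : ∀ s : Σ i, Fin (m.1 i), ColoredTree ι s.1 =>
        A m j * ∏ s, treeTerm q A z (children s)) (A m j * ∏ i, treeSeries q A z i ^ m.1 i) := by
    intro m
    rw [← ColoredTree.prod_children_eq]
    exact (hasSum_prod fun s : Σ i, Fin (m.1 i) => h.summable_norm hz s.1).mul_left (A m j)
  have hwj : HasSum (fun m => A m j * ∏ i, treeSeries q A z i ^ m.1 i) (w j) := by
    simpa only [Pi.smul_apply, smul_eq_mul, mul_comm] using Pi.hasSum.1 hw j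
  have hseries : ∀ {z}, z ∈ U → treeSeries q A z j = z j + ∑' p : Σ m : MultiIndex ι,
      ∀ s : Σ i, Fin (m.1 i), ColoredTree ι s.1, treeTerm q A z (.node j p.1 p.2) := fun {z} hz =>
    treeTerm_leaf q A z j ▸
      (ColoredTree.hasSum_of_hasSum_node (hsummable_node hz).hasSum).tsum_eq
  rw [(hwj.unique (hdiff.sigma hfiber)), hseries hz, hseries hqz]
  have := hq j
  field_simp
  ring

end TreeSeriesConvergesOn

theorem exists_treeSeriesConvergesOn {ν : ℕ} {lam q : Fin ν → ℂ}
    (hq : ∀ j, q j = exp (2 * Real.pi * I * lam j)) (hres : NonResonantQ q)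
    (hB : Summable (brunoTermD lam)) {A : MultiIndex (Fin ν) → Fin ν → ℂ} {R : ℝ} (hR : 0 < R)
    (hA : Summable fun m => ‖A m‖ * R ^ ∑ i, m.1 i) :
    ∃ r > 0, TreeSeriesConvergesOn q A (ball 0 r) := by
  obtain ⟨δ, hδ, hdiv⟩ := exists_pow_size_le_norm_prod_smallDivisor hq hres hB
  obtain ⟨ρ, hρ, hsum⟩ := ColoredTree.exists_summable_eval A hR hA
  refine ⟨δ * ρ, mul_pos hδ hρ, fun j => ⟨_, hsum j, fun T z hz => ?_⟩⟩
  exact norm_treeTerm_le hδ T (hdiv j T) fun i =>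
    (norm_le_pi_norm z i).trans (mem_ball_zero_iff.1 hz).le

end Linearization

/-- Bruno–Rüssmann theorem for diffeomorphisms: if `q = (e^{2πiλ₁},…,e^{2πiλ_ν})` is
non-resonant and satisfies the Bruno condition `𝓑(q) < ∞`, and the nonlinear part `a` is
holomorphic near `0` with `a(0) = 0`, `Da(0) = 0`, then the linearization problem for
`g = R_q ∘ (id + a)` has a convergent solution `h` with `h(0) = 0`, `Dh(0) = id` and
`g(h(z)) = h(R_q z)` near `0`. -/
theorem holomorphic_linearization_diffeo (ν : ℕ) (lam q : Fin ν → ℂ)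
    (hq : ∀ j, q j = Complex.exp (2 * Real.pi * Complex.I * lam j))
    (hres : NonResonantQ q)
    (hB : Summable (brunoTermD lam))
    (a : (Fin ν → ℂ) → (Fin ν → ℂ)) (b : ℝ) (hb : 0 < b)
    (ha : DifferentiableOn ℂ a (Metric.ball 0 b))
    (ha0 : a 0 = 0) (hDa : fderiv ℂ a 0 = 0) :
    ∃ r > 0, ∃ h : (Fin ν → ℂ) → (Fin ν → ℂ),
      DifferentiableOn ℂ h (Metric.ball 0 r) ∧ h 0 = 0 ∧
      fderiv ℂ h 0 = ContinuousLinearMap.id ℂ (Fin ν → ℂ) ∧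
      ∃ ε > 0, ∀ z ∈ Metric.ball (0 : Fin ν → ℂ) ε,
        (fun i => q i * (h z i + a (h z) i)) = h fun i => q i * z i := by
  obtain ⟨R, hR, A, hA, hexp⟩ := exists_hasSum_of_fderiv_eq_zero hb ha ha0 hDa
  obtain ⟨r, hr, hconv⟩ := exists_treeSeriesConvergesOn hq hres hB hR hA
  have hderiv := hconv.hasFDerivAt_zero isOpen_ball (mem_ball_self hr)
  refine ⟨r, hr, treeSeries q A, hconv.differentiableOn isOpen_ball, treeSeries_zero q A,
    hderiv.fderiv, Metric.eventually_nhds_iff_ball.1 ?_⟩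
  have hq0 : ∀ j, q j ≠ 0 := fun j => hq j ▸ exp_ne_zero _
  have hmul : Continuous fun z : Fin ν → ℂ => fun i => q i * z i := by fun_prop
  filter_upwards [ball_mem_nhds 0 hr,
    hmul.tendsto' 0 0 (by ext; simp) (ball_mem_nhds 0 hr),
    hderiv.continuousAt.tendsto (closedBall_mem_nhds _ hR)] with z hz hqz hhz
  rw [Set.mem_preimage, treeSeries_zero, mem_closedBall_zero_iff] at hhz
  exact hconv.linearizes hq0 (fun x => smallDivisor_ne_zero hq0 hres) hz hqz (hexp _ hhz)
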